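/- For every even natural number n ≥ 6, the Orchard crossing number of the wheel graph W_{n,1} equals n(n² − 4n + 12)/8. -/

import Mathlib

/-!
Common definitions for the Orchard crossing number
(Feder–Garber, "The Orchard crossing number of an abstract graph").
-/

noncomputable section

/-- Points of the plane. -/
abbrev Pt : Type := ℝ × ℝ

/-- The line through two points of the plane. -/
def lineThrough (p q : Pt) : Set Pt := (affineSpan ℝ ({p, q} : Set Pt) : Set Pt)

/-- A line (or any set) `L` separates the points `P` and `Q` if both lie off `L`
and they lie in different connected components of the complement of `L`. -/
def Separates (L : Set Pt) (P Q : Pt) : Prop :=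
  P ∉ L ∧ Q ∉ L ∧ connectedComponentIn Lᶜ P ≠ connectedComponentIn Lᶜ Q

theorem Separates.symm {L : Set Pt} {P Q : Pt} (h : Separates L P Q) : Separates L Q P :=
  ⟨h.2.1, h.1, h.2.2.symm⟩

/-- A generic configuration: a finite set of points, no three of which are collinear. -/
def GenericConfig (S : Set Pt) : Prop :=
  S.Finite ∧ ∀ p ∈ S, ∀ q ∈ S, ∀ r ∈ S, p ≠ q → p ≠ r → q ≠ r →
    ¬ Collinear ℝ ({p, q, r} : Set Pt)

/-- A finite set of points is in convex position if every point of it is an extreme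
point of its convex hull, i.e. lies outside the convex hull of the other points. -/
def ConvexPosition (S : Set Pt) : Prop :=
  ∀ p ∈ S, p ∉ convexHull ℝ (S \ {p})

variable {V : Type*} [Fintype V] [DecidableEq V]

/-- A rectilinear drawing of a graph on vertex set `V`: an injective placement of the
vertices in the plane whose image is a generic configuration. -/
def IsRectDrawing (f : V → Pt) : Prop :=
  Function.Injective f ∧ GenericConfig (Set.range f)

/-- `sepCount f s t` is `n(s,t)`: the number of (unordered) pairs of vertices, both
different from `s` and `t`, whose drawn points span a line separating `f s` from `f t`. -/
def sepCount (f : V → Pt) (s t : V) : ℕ :=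
  Set.ncard {e : Finset V | ∃ a b : V, e = {a, b} ∧ a ≠ b ∧ s ∉ e ∧ t ∉ e ∧
    Separates (lineThrough (f a) (f b)) (f s) (f t)}

theorem sepCount_symm (f : V → Pt) (s t : V) : sepCount f s t = sepCount f t s := by
  unfold sepCount
  congr 1
  ext e
  constructor
  · rintro ⟨a, b, rfl, hab, hs, ht, hsep⟩
    exact ⟨a, b, rfl, hab, ht, hs, hsep.symm⟩
  · rintro ⟨a, b, rfl, hab, ht, hs, hsep⟩
    exact ⟨a, b, rfl, hab, hs, ht, hsep.symm⟩

/-- The crossing number `n(R(G))` of a drawing: the sum of `n(s,t)` over all edges. -/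
def drawingCrossings (G : SimpleGraph V) (f : V → Pt) : ℕ :=
  ∑ e ∈ G.edgeSet.toFinite.toFinset,
    Sym2.lift ⟨fun s t => sepCount f s t, fun s t => sepCount_symm f s t⟩ e

/-- The Orchard crossing number: the minimum of `n(R(G))` over all rectilinear drawings. -/
def OCN (G : SimpleGraph V) : ℕ :=
  sInf {n | ∃ f : V → Pt, IsRectDrawing f ∧ drawingCrossings G f = n}

/-- The maximal Orchard crossing number: the maximum of `n(R(G))` over all drawings. -/
def MOCN (G : SimpleGraph V) : ℕ :=
  sSup {n | ∃ f : V → Pt, IsRectDrawing f ∧ drawingCrossings G f = n}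

/-- The open segment drawn for an edge. -/
def edgeSeg (f : V → Pt) (e : Sym2 V) : Set Pt :=
  Sym2.lift ⟨fun a b => openSegment ℝ (f a) (f b), fun a b => openSegment_symm ℝ (f a) (f b)⟩ e

/-- The number of unordered pairs of distinct edges of `G` whose drawn open segments
intersect. -/
def crossPairs (G : SimpleGraph V) (f : V → Pt) : ℕ :=
  Set.ncard {p : Finset (Sym2 V) | ∃ e₁ e₂ : Sym2 V, p = {e₁, e₂} ∧ e₁ ≠ e₂ ∧
    e₁ ∈ G.edgeSet ∧ e₂ ∈ G.edgeSet ∧ (edgeSeg f e₁ ∩ edgeSeg f e₂).Nonempty}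

/-- The rectilinear crossing number: the minimum number of crossing pairs of edges
over all rectilinear drawings. -/
def rcr (G : SimpleGraph V) : ℕ :=
  sInf {n | ∃ f : V → Pt, IsRectDrawing f ∧ crossPairs G f = n}

/-- The number of 4-element subsets of the drawn points which are in convex position. -/
def convexFour (f : V → Pt) : ℕ :=
  Set.ncard {Q : Finset Pt | Q.card = 4 ∧ (Q : Set Pt) ⊆ Set.range f ∧
    ConvexPosition (Q : Set Pt)}

/-- The cyclic successor on `Fin n`. -/
def nextFin {n : ℕ} (i : Fin n) : Fin n :=
  ⟨(i.val + 1) % n, Nat.mod_lt _ (Nat.zero_lt_of_lt i.isLt)⟩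

/-- The star graph `K_{n,1}` on `n+1` vertices: the center `0` is joined to each of
the `n` outer vertices. -/
def starGraph (n : ℕ) : SimpleGraph (Fin (n + 1)) :=
  SimpleGraph.fromEdgeSet {e | ∃ i : Fin n, e = s((0 : Fin (n + 1)), i.succ)}

/-- The wheel graph `W_{n,1}` on `n+1` vertices: a cycle on the `n` outer vertices
together with a hub `0` joined to each of them. -/
def wheelGraph (n : ℕ) : SimpleGraph (Fin (n + 1)) :=
  SimpleGraph.fromEdgeSet
    ({e | ∃ i : Fin n, e = s((0 : Fin (n + 1)), i.succ)} ∪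
     {e | ∃ i : Fin n, e = s(i.succ, (nextFin i).succ)})

/-- The cycle graph `C_n` on the outer vertices `1, …, n` of `Fin (n+1)`, together
with the isolated vertex `0`. -/
def cycleWithIsolated (n : ℕ) : SimpleGraph (Fin (n + 1)) :=
  SimpleGraph.fromEdgeSet {e | ∃ i : Fin n, e = s(i.succ, (nextFin i).succ)}

/-- `HullCycle f` says that for every `i`, all the other drawn points lie (strictly) on
one side of the line through `f i` and `f (i+1)`; for an injective generic placement this
means the points are in convex position and occur around the convex hull exactly in the
cyclic order `f 0, f 1, …`. -/
def HullCycle {m : ℕ} (f : Fin m → Pt) : Prop :=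
  ∀ i j l : Fin m, j ≠ i → j ≠ nextFin i → l ≠ i → l ≠ nextFin i →
    ¬ Separates (lineThrough (f i) (f (nextFin i))) (f j) (f l)

end

/-!
Let `h` be the hub of the wheel. For an outer vertex `v` let `o v` be the number of outer vertices
to the left of the ray from `h` to `v`, so that `∑ v, o v = n.choose 2`. A separation of a spoke
`h t` by the line through `a` and `b` yields the triple `{t, a, b}`, which lies in a half-plane
bounded by a line through `h`. Every such triple arises, and there are `∑ v, (o v).choose 2` of
them. Put `c = (n - 1) / 2`. By convexity `(o v).choose 2` is at least the value at `o v` of the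
chord of `o ↦ o.choose 2` over `[c, c + 1]`, and exceeds it by at least `1` if `o v ∉ {c, c + 1}`.
If instead `o v ∈ {c, c + 1}`, then the line through `h` and `v` has outer vertices on both sides,
so it separates the ends of some rim edge. Thus every outer vertex contributes at least `1` more
than the chord. Equality holds when the outer vertices are `n` consecutive vertices of a regular
`(2 * (n / 2) + 1)`-gon with `h` at its center.
-/

noncomputable section

section Orientation

variable {p q r P Q : Pt}

/-- Twice the signed area of the triangle `p q r`: it is positive when `r` lies to the left of the
line directed from `p` to `q`. -/
def orient (p q r : Pt) : ℝ :=
  (q.1 - p.1) * (r.2 - p.2) - (q.2 - p.2) * (r.1 - p.1)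

theorem orient_rotate (p q r : Pt) : orient q r p = orient p q r := by
  unfold orient; ring

theorem orient_swap_left (p q r : Pt) : orient q p r = -orient p q r := by
  unfold orient; ring

theorem orient_swap_right (p q r : Pt) : orient p r q = -orient p q r := by
  unfold orient; ring

@[simp] theorem orient_self_left (p q : Pt) : orient p p q = 0 := by
  simp [orient]

@[simp] theorem orient_self_right (p q : Pt) : orient p q q = 0 := by
  unfold orient; ring

@[simp] theorem orient_self_outer (p q : Pt) : orient p q p = 0 := by
  simp [orient]

theorem orient_eq_add_add (o p q r : Pt) :
    orient p q r = orient o p q + orient o q r + orient o r p := by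
  unfold orient; ring

theorem continuous_orient (p q : Pt) : Continuous (orient p q) := by
  unfold orient; fun_prop

theorem convex_setOf_orient_pos (p q : Pt) : Convex ℝ {x | 0 < orient p q x} := by
  have hlin : IsLinearMap ℝ fun x : Pt => (q.1 - p.1) * x.2 - (q.2 - p.2) * x.1 :=
    ⟨fun x y => by simp only [Prod.fst_add, Prod.snd_add]; ring,
      fun c x => by simp only [Prod.smul_fst, Prod.smul_snd, smul_eq_mul]; ring⟩
  have horient (x : Pt) : orient p q x =
      (q.1 - p.1) * x.2 - (q.2 - p.2) * x.1 - ((q.1 - p.1) * p.2 - (q.2 - p.2) * p.1) := by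
    unfold orient; ring
  simpa only [horient, sub_pos] using convex_halfSpace_gt hlin _

theorem lineThrough_comm (p q : Pt) : lineThrough p q = lineThrough q p := by
  unfold lineThrough; rw [Set.pair_comm]

theorem mem_lineThrough_iff_orient_eq_zero (hpq : p ≠ q) :
    r ∈ lineThrough p q ↔ orient p q r = 0 := by
  unfold lineThrough orient
  rw [SetLike.mem_coe, ← vsub_vadd r p, vadd_left_mem_affineSpan_pair]
  simp only [Prod.ext_iff, Prod.smul_fst, Prod.smul_snd, vsub_eq_sub, vadd_eq_add,
    sub_add_cancel, Prod.fst_sub, Prod.snd_sub, smul_eq_mul]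
  constructor
  · rintro ⟨c, h₁, h₂⟩
    rw [← h₁, ← h₂]
    ring
  · intro h
    by_cases hx : q.1 - p.1 = 0
    · have hy : q.2 - p.2 ≠ 0 := fun hy => hpq (Prod.ext (by linarith) (by linarith))
      have hr : r.1 - p.1 = 0 := by simpa [hx, hy] using h
      exact ⟨(r.2 - p.2) / (q.2 - p.2), by rw [hx, hr, mul_zero], by field_simp⟩
    · refine ⟨(r.1 - p.1) / (q.1 - p.1), by field_simp, ?_⟩
      field_simp
      linarith

theorem collinear_iff_orient_eq_zero :
    Collinear ℝ ({p, q, r} : Set Pt) ↔ orient p q r = 0 := by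
  rcases eq_or_ne p q with rfl | hpq
  · simp [collinear_pair]
  rw [← mem_lineThrough_iff_orient_eq_zero hpq]
  refine ⟨fun h => h.mem_affineSpan_of_mem_of_ne (by simp) (by simp) (by simp) hpq, fun h => ?_⟩
  have hcol := collinear_insert_of_mem_affineSpan_pair (k := ℝ) (p₁ := r) h
  rwa [Set.insert_comm, Set.pair_comm r q] at hcol

theorem connectedComponentIn_eq_of_orient_pos
    (hP : 0 < orient p q P) (hQ : 0 < orient p q Q) :
    connectedComponentIn (lineThrough p q)ᶜ P = connectedComponentIn (lineThrough p q)ᶜ Q := by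
  have hpq : p ≠ q := by rintro rfl; simp at hP
  refine connectedComponentIn_eq ((convex_setOf_orient_pos p q).isPreconnected
    |>.subset_connectedComponentIn hP (fun x hx => ?_) hQ)
  rw [Set.mem_compl_iff, mem_lineThrough_iff_orient_eq_zero hpq]
  exact ne_of_gt hx

theorem connectedComponentIn_eq_of_orient_mul_pos (h : 0 < orient p q P * orient p q Q) :
    connectedComponentIn (lineThrough p q)ᶜ P = connectedComponentIn (lineThrough p q)ᶜ Q := by
  rcases pos_and_pos_or_neg_and_neg_of_mul_pos h with ⟨hP, hQ⟩ | ⟨hP, hQ⟩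
  · exact connectedComponentIn_eq_of_orient_pos hP hQ
  · rw [lineThrough_comm]
    apply connectedComponentIn_eq_of_orient_pos <;> rwa [orient_swap_left, neg_pos]

theorem connectedComponentIn_ne_of_orient_mul_neg (hpq : p ≠ q)
    (h : orient p q P * orient p q Q < 0) :
    connectedComponentIn (lineThrough p q)ᶜ P ≠ connectedComponentIn (lineThrough p q)ᶜ Q := by
  intro heq
  have mem_compl {x : Pt} (hx : orient p q x ≠ 0) : x ∈ (lineThrough p q)ᶜ := by
    rwa [Set.mem_compl_iff, mem_lineThrough_iff_orient_eq_zero hpq]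
  have hP := mem_connectedComponentIn (mem_compl (left_ne_zero_of_mul h.ne))
  have hQ := mem_connectedComponentIn (mem_compl (right_ne_zero_of_mul h.ne))
  rw [← heq] at hQ
  have hord : (orient p q '' connectedComponentIn (lineThrough p q)ᶜ P).OrdConnected :=
    (isPreconnected_connectedComponentIn.image _ (continuous_orient p q).continuousOn).ordConnected
  obtain ⟨x, hx, hx₀⟩ : (0 : ℝ) ∈ orient p q '' connectedComponentIn (lineThrough p q)ᶜ P := by
    have hP' := Set.mem_image_of_mem (orient p q) hP
    have hQ' := Set.mem_image_of_mem (orient p q) hQ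
    rcases mul_neg_iff.mp h with ⟨ha, hb⟩ | ⟨ha, hb⟩
    · exact hord.out hQ' hP' ⟨hb.le, ha.le⟩
    · exact hord.out hP' hQ' ⟨ha.le, hb.le⟩
  exact connectedComponentIn_subset _ _ hx ((mem_lineThrough_iff_orient_eq_zero hpq).2 hx₀)

theorem separates_lineThrough_iff (hpq : p ≠ q) :
    Separates (lineThrough p q) P Q ↔ orient p q P * orient p q Q < 0 := by
  constructor
  · rintro ⟨hP, hQ, hne⟩
    rw [mem_lineThrough_iff_orient_eq_zero hpq] at hP hQ
    exact (mul_ne_zero hP hQ).lt_of_le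
      (not_lt.mp fun h => hne (connectedComponentIn_eq_of_orient_mul_pos h))
  · intro h
    refine ⟨?_, ?_, connectedComponentIn_ne_of_orient_mul_neg hpq h⟩ <;>
      rw [mem_lineThrough_iff_orient_eq_zero hpq]
    exacts [left_ne_zero_of_mul h.ne, right_ne_zero_of_mul h.ne]

end Orientation

section Drawing

variable {V : Type*} {f : V → Pt}

theorem IsRectDrawing.orient_ne_zero (hf : IsRectDrawing f) {a b c : V}
    (hab : a ≠ b) (hac : a ≠ c) (hbc : b ≠ c) : orient (f a) (f b) (f c) ≠ 0 := by
  rw [Ne, ← collinear_iff_orient_eq_zero]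
  exact hf.2.2 _ ⟨a, rfl⟩ _ ⟨b, rfl⟩ _ ⟨c, rfl⟩ (hf.1.ne hab) (hf.1.ne hac) (hf.1.ne hbc)

theorem isRectDrawing_of_orient_ne_zero [Fintype V] (hV : 2 < Fintype.card V)
    (h : ∀ a b c, a ≠ b → a ≠ c → b ≠ c → orient (f a) (f b) (f c) ≠ 0) : IsRectDrawing f := by
  refine ⟨fun a b hab => ?_, Set.finite_range f, ?_⟩
  · by_contra hne
    obtain ⟨c, hca, hcb⟩ := ENat.exists_ne_ne_of_three_le
      (by rw [ENat.card_eq_coe_fintype_card]; exact_mod_cast hV) a b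
    exact h a b c hne hca.symm hcb.symm (by rw [hab, orient_self_left])
  · rintro _ ⟨a, rfl⟩ _ ⟨b, rfl⟩ _ ⟨c, rfl⟩ hab hac hbc
    rw [collinear_iff_orient_eq_zero]
    exact h a b c (ne_of_apply_ne f hab) (ne_of_apply_ne f hac) (ne_of_apply_ne f hbc)

theorem isRectDrawing_of_orient_ne_zero_of_lt [Fintype V] [LinearOrder V]
    (hV : 2 < Fintype.card V)
    (h : ∀ a b c, a < b → b < c → orient (f a) (f b) (f c) ≠ 0) : IsRectDrawing f := by
  refine isRectDrawing_of_orient_ne_zero hV fun a b c hab hac hbc => ?_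
  have swap_left {x y z : V} : orient (f y) (f x) (f z) ≠ 0 → orient (f x) (f y) (f z) ≠ 0 := by
    rw [orient_swap_left, neg_ne_zero]; exact id
  have swap_right {x y z : V} : orient (f x) (f z) (f y) ≠ 0 → orient (f x) (f y) (f z) ≠ 0 := by
    rw [orient_swap_right, neg_ne_zero]; exact id
  rcases hab.lt_or_gt with hab | hab <;> rcases hac.lt_or_gt with hac | hac <;>
    rcases hbc.lt_or_gt with hbc | hbc
  · exact h _ _ _ hab hbc
  · exact swap_right (h _ _ _ hac hbc)
  · exact absurd (hab.trans hbc) hac.not_gt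
  · exact swap_right (swap_left (h _ _ _ hac hab))
  · exact swap_left (h _ _ _ hab hac)
  · exact absurd (hbc.trans hab) hac.not_gt
  · exact swap_left (swap_right (h _ _ _ hbc hac))
  · exact swap_left (swap_right (swap_left (h _ _ _ hbc hab)))

variable [DecidableEq V]

theorem sepCount_self (f : V → Pt) (s : V) : sepCount f s s = 0 := by
  simp [sepCount, Separates]

variable [Fintype V]

/-- The pairs of vertices whose line separates `f s` from `f t`. The product of orientations
vanishes when `a = b` or when one of `s`, `t` is `a` or `b`, so these cases are excluded. -/
def separatingPairs (f : V → Pt) (s t : V) : Finset (Finset V) :=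
  {e | ∃ a b, e = {a, b} ∧ orient (f a) (f b) (f s) * orient (f a) (f b) (f t) < 0}

theorem pair_mem_separatingPairs {s t a b : V} : {a, b} ∈ separatingPairs f s t ↔
    orient (f a) (f b) (f s) * orient (f a) (f b) (f t) < 0 := by
  simp only [separatingPairs, Finset.mem_filter_univ]
  refine ⟨?_, fun h => ⟨a, b, rfl, h⟩⟩
  rintro ⟨c, d, hcd, h⟩
  rw [← Finset.coe_inj, Finset.coe_pair, Finset.coe_pair, Set.pair_eq_pair_iff] at hcd
  rcases hcd with ⟨rfl, rfl⟩ | ⟨rfl, rfl⟩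
  · exact h
  · rwa [orient_swap_left (f b), orient_swap_left (f b), neg_mul_neg]

theorem exists_pair_of_mem_separatingPairs {s t : V} {e : Finset V}
    (h : e ∈ separatingPairs f s t) : ∃ a b, e = {a, b} ∧ {a, b} ∈ separatingPairs f s t := by
  obtain ⟨a, b, rfl, -⟩ := (Finset.mem_filter_univ _).mp h
  exact ⟨a, b, rfl, h⟩

theorem sepCount_eq_card_separatingPairs (hf : Function.Injective f) (s t : V) :
    sepCount f s t = (separatingPairs f s t).card := by
  unfold sepCount separatingPairs
  rw [← Set.ncard_coe_finset]
  congr 1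
  ext e
  rw [Set.mem_ofPred_eq, Finset.mem_coe, Finset.mem_filter_univ]
  refine exists_congr fun a => exists_congr fun b => and_congr_right ?_
  rintro rfl
  constructor
  · rintro ⟨hab, -, -, hsep⟩
    exact (separates_lineThrough_iff (hf.ne hab)).mp hsep
  · intro h
    have hab : a ≠ b := by rintro rfl; simp at h
    have hs : s ∉ ({a, b} : Finset V) := by
      rw [Finset.mem_insert, Finset.mem_singleton]
      rintro (rfl | rfl) <;> simp at h
    have ht : t ∉ ({a, b} : Finset V) := by
      rw [Finset.mem_insert, Finset.mem_singleton]
      rintro (rfl | rfl) <;> simp at h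
    exact ⟨hab, hs, ht, (separates_lineThrough_iff (hf.ne hab)).mpr h⟩

end Drawing

section Spokes

variable {V : Type*} [Fintype V] {f : V → Pt} {h u v w : V}

/-- The vertices lying strictly to the left of the ray from the hub `h` to the vertex `v`. -/
def leftOf (f : V → Pt) (h v : V) : Finset V :=
  {w | 0 < orient (f h) (f v) (f w)}

theorem mem_leftOf : w ∈ leftOf f h v ↔ 0 < orient (f h) (f v) (f w) := by
  simp [leftOf]

theorem leftOf_self (f : V → Pt) (h : V) : leftOf f h h = ∅ := by
  simp [leftOf]

theorem ne_of_mem_leftOf (hw : w ∈ leftOf f h v) : v ≠ w := by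
  rintro rfl; simp [mem_leftOf] at hw

theorem hub_ne_of_mem_leftOf (hw : w ∈ leftOf f h v) : h ≠ v ∧ h ≠ w := by
  constructor <;> rintro rfl <;> simp [mem_leftOf] at hw

theorem notMem_leftOf_symm (hw : w ∈ leftOf f h v) : v ∉ leftOf f h w := by
  rw [mem_leftOf] at hw ⊢
  rw [orient_swap_right]
  linarith

theorem IsRectDrawing.mem_leftOf_or_mem_leftOf (hf : IsRectDrawing f) (hv : h ≠ v) (hw : h ≠ w)
    (hvw : v ≠ w) : w ∈ leftOf f h v ∨ v ∈ leftOf f h w := by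
  rw [mem_leftOf, mem_leftOf, orient_swap_right (f h) (f v) (f w), neg_pos]
  exact (hf.orient_ne_zero hv hw hvw).lt_or_gt.symm

theorem IsRectDrawing.card_leftOf_add_card [DecidableEq V] (hf : IsRectDrawing f) (hv : h ≠ v) :
    (leftOf f h v).card + (Finset.univ.filter fun w => v ∈ leftOf f h w).card =
      Fintype.card V - 2 := by
  rw [← Finset.card_union_of_disjoint]
  · have hunion : leftOf f h v ∪ Finset.univ.filter (fun w => v ∈ leftOf f h w) =
        (Finset.univ.erase h).erase v := by
      ext w
      simp only [Finset.mem_union, Finset.mem_filter_univ, Finset.mem_erase, Finset.mem_univ,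
        and_true]
      constructor
      · rintro (hw | hw)
        · exact ⟨(ne_of_mem_leftOf hw).symm, (hub_ne_of_mem_leftOf hw).2.symm⟩
        · exact ⟨ne_of_mem_leftOf hw, (hub_ne_of_mem_leftOf hw).1.symm⟩
      · rintro ⟨hwv, hwh⟩
        exact hf.mem_leftOf_or_mem_leftOf hv hwh.symm hwv.symm
    rw [hunion, Finset.card_erase_of_mem (by simpa using hv.symm),
      Finset.card_erase_of_mem (Finset.mem_univ h), Finset.card_univ, Nat.sub_sub]
  · exact Finset.disjoint_left.mpr fun w hw hw' =>
      notMem_leftOf_symm hw ((Finset.mem_filter_univ w).mp hw')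

theorem IsRectDrawing.sum_card_leftOf (hf : IsRectDrawing f) (h : V) :
    ∑ v, (leftOf f h v).card = (Fintype.card V - 1).choose 2 := by
  classical
  rw [Nat.choose_two_right, Nat.sub_sub]
  refine (Nat.div_eq_of_eq_mul_right two_pos (Eq.symm ?_)).symm
  have hswap : ∑ v, (leftOf f h v).card =
      ∑ v, (Finset.univ.filter fun w => v ∈ leftOf f h w).card := by
    simpa [Finset.bipartiteAbove, Finset.bipartiteBelow] using
      Finset.sum_card_bipartiteAbove_eq_sum_card_bipartiteBelow (s := Finset.univ)
        (t := Finset.univ) fun v w => w ∈ leftOf f h v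
  have hhub : (Finset.univ.filter fun w => h ∈ leftOf f h w) = ∅ :=
    Finset.filter_eq_empty_iff.mpr fun w _ hw => (hub_ne_of_mem_leftOf hw).2 rfl
  calc 2 * ∑ v, (leftOf f h v).card
      = ∑ v, ((leftOf f h v).card + (Finset.univ.filter fun w => v ∈ leftOf f h w).card) := by
        rw [Finset.sum_add_distrib, ← hswap, two_mul]
    _ = ∑ v ∈ Finset.univ.erase h, (Fintype.card V - 2) := by
        rw [← Finset.add_sum_erase _ _ (Finset.mem_univ h), leftOf_self, hhub, Finset.card_empty,
          zero_add, zero_add]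
        exact Finset.sum_congr rfl fun v hv =>
          hf.card_leftOf_add_card (Finset.ne_of_mem_erase hv).symm
    _ = (Fintype.card V - 1) * (Fintype.card V - 2) := by
        rw [Finset.sum_const, Finset.card_erase_of_mem (Finset.mem_univ h), Finset.card_univ,
          smul_eq_mul]

variable [DecidableEq V]

/-- The triples of vertices contained in an open half-plane whose boundary line passes through the
hub `h`: one of the three vertices has the other two on its left. -/
def halfPlaneTriples (f : V → Pt) (h : V) : Finset (Finset V) :=
  Finset.univ.biUnion fun u => ((leftOf f h u).powersetCard 2).image (insert u)

theorem insert_pair_mem_halfPlaneTriples (hv : v ∈ leftOf f h u) (hw : w ∈ leftOf f h u)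
    (hvw : v ≠ w) : {u, v, w} ∈ halfPlaneTriples f h := by
  simp only [halfPlaneTriples, Finset.mem_biUnion, Finset.mem_univ, true_and, Finset.mem_image,
    Finset.mem_powersetCard]
  exact ⟨u, {v, w}, ⟨by simp [Finset.insert_subset_iff, hv, hw], Finset.card_pair hvw⟩, rfl⟩

theorem IsRectDrawing.exists_of_mem_halfPlaneTriples (hf : IsRectDrawing f) {T : Finset V}
    (hT : T ∈ halfPlaneTriples f h) :
    ∃ u v w, T = {u, v, w} ∧ v ∈ leftOf f h u ∧ w ∈ leftOf f h u ∧ w ∈ leftOf f h v := by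
  simp only [halfPlaneTriples, Finset.mem_biUnion, Finset.mem_univ, true_and, Finset.mem_image,
    Finset.mem_powersetCard] at hT
  obtain ⟨u, e, ⟨hsub, hcard⟩, rfl⟩ := hT
  obtain ⟨v, w, hvw, rfl⟩ := Finset.card_eq_two.mp hcard
  have hv : v ∈ leftOf f h u := hsub (Finset.mem_insert_self v _)
  have hw : w ∈ leftOf f h u := hsub (Finset.mem_insert_of_mem (Finset.mem_singleton_self w))
  rcases hf.mem_leftOf_or_mem_leftOf (hub_ne_of_mem_leftOf hv).2 (hub_ne_of_mem_leftOf hw).2 hvw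
    with hwv | hvw
  · exact ⟨u, v, w, rfl, hv, hw, hwv⟩
  · exact ⟨u, w, v, by rw [Finset.pair_comm], hw, hv, hvw⟩

theorem card_halfPlaneTriples (f : V → Pt) (h : V) :
    (halfPlaneTriples f h).card = ∑ u, (leftOf f h u).card.choose 2 := by
  rw [halfPlaneTriples, Finset.card_biUnion]
  · refine Finset.sum_congr rfl fun u _ => ?_
    rw [Finset.card_image_of_injOn, Finset.card_powersetCard]
    intro e he d hd hed
    have notMem {e : Finset V} (he : e ∈ (leftOf f h u).powersetCard 2) : u ∉ e :=
      fun hu => ne_of_mem_leftOf ((Finset.mem_powersetCard.mp he).1 hu) rfl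
    rw [← Finset.erase_insert (notMem he), hed, Finset.erase_insert (notMem hd)]
  · intro u _ v _ huv
    rw [Function.onFun, Finset.disjoint_left]
    intro T hu hv
    obtain ⟨e, he, rfl⟩ := Finset.mem_image.mp hu
    obtain ⟨d, hd, hde⟩ := Finset.mem_image.mp hv
    have hve : v ∈ e := Finset.mem_of_mem_insert_of_ne (hde ▸ Finset.mem_insert_self v d) huv.symm
    have hud : u ∈ d := Finset.mem_of_mem_insert_of_ne (hde ▸ Finset.mem_insert_self u e) huv
    exact notMem_leftOf_symm ((Finset.mem_powersetCard.mp he).1 hve)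
      ((Finset.mem_powersetCard.mp hd).1 hud)

/-- The pairs consisting of the outer end `t` of a spoke from the hub `h` and of a pair of vertices
whose line separates `t` from `h`. -/
def spokeSeparations (f : V → Pt) (h : V) : Finset (Σ _ : V, Finset V) :=
  Finset.univ.sigma fun t => separatingPairs f h t

theorem mk_pair_mem_spokeSeparations {t a b : V} : ⟨t, {a, b}⟩ ∈ spokeSeparations f h ↔
    orient (f h) (f a) (f b) * orient (f a) (f b) (f t) < 0 := by
  rw [spokeSeparations, Finset.mem_sigma, ← orient_rotate (f h)]
  simpa using pair_mem_separatingPairs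

theorem exists_of_mem_spokeSeparations {x : Σ _ : V, Finset V} (hx : x ∈ spokeSeparations f h) :
    ∃ t a b, x = ⟨t, {a, b}⟩ ∧ b ∈ leftOf f h a ∧ orient (f a) (f b) (f t) < 0 := by
  obtain ⟨t, e⟩ := x
  obtain ⟨a, b, rfl, -⟩ := exists_pair_of_mem_separatingPairs (Finset.mem_sigma.mp hx).2
  rcases mul_neg_iff.mp (mk_pair_mem_spokeSeparations.mp hx) with ⟨hab, ht⟩ | ⟨hab, ht⟩
  · exact ⟨t, a, b, rfl, mem_leftOf.mpr hab, ht⟩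
  · refine ⟨t, b, a, by rw [Finset.pair_comm], ?_, ?_⟩
    · rwa [mem_leftOf, orient_swap_right, neg_pos]
    · rwa [orient_swap_left, neg_lt_zero]

theorem card_spokeSeparations (hf : Function.Injective f) (h : V) :
    (spokeSeparations f h).card = ∑ t, sepCount f h t := by
  simp only [spokeSeparations, Finset.card_sigma, sepCount_eq_card_separatingPairs hf]

theorem IsRectDrawing.insert_mem_halfPlaneTriples (hf : IsRectDrawing f)
    {x : Σ _ : V, Finset V} (hx : x ∈ spokeSeparations f h) :
    insert x.1 x.2 ∈ halfPlaneTriples f h := by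
  obtain ⟨t, a, b, rfl, hab, ht⟩ := exists_of_mem_spokeSeparations hx
  have hta : t ≠ a := by rintro rfl; simp at ht
  have htb : t ≠ b := by rintro rfl; simp at ht
  have hth : h ≠ t := by
    rintro rfl
    rw [orient_rotate] at ht
    exact ht.not_gt (mem_leftOf.mp hab)
  have hne := ne_of_mem_leftOf hab
  obtain ⟨ha, hb⟩ := hub_ne_of_mem_leftOf hab
  rcases hf.mem_leftOf_or_mem_leftOf ha hth hta.symm with hat | hat
  · simpa only [Finset.insert_comm a t] using insert_pair_mem_halfPlaneTriples hat hab htb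
  · rcases hf.mem_leftOf_or_mem_leftOf hth hb htb with hbt | hbt
    · exact insert_pair_mem_halfPlaneTriples hat hbt hne
    · -- The hub would lie inside the triangle `a b t`.
      rw [mem_leftOf] at hab hat hbt
      linarith [orient_eq_add_add (f h) (f a) (f b) (f t)]

theorem IsRectDrawing.image_insert_spokeSeparations (hf : IsRectDrawing f) (h : V) :
    (spokeSeparations f h).image (fun x => insert x.1 x.2) = halfPlaneTriples f h := by
  ext T
  rw [Finset.mem_image]
  refine ⟨fun ⟨x, hx, hxT⟩ => hxT ▸ hf.insert_mem_halfPlaneTriples hx, fun hT => ?_⟩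
  obtain ⟨u, v, w, rfl, hv, hw, hwv⟩ := hf.exists_of_mem_halfPlaneTriples hT
  have hne : orient (f u) (f v) (f w) ≠ 0 :=
    hf.orient_ne_zero (ne_of_mem_leftOf hv) (ne_of_mem_leftOf hw) (ne_of_mem_leftOf hwv)
  rw [mem_leftOf] at hv hw hwv
  rcases hne.lt_or_gt with hneg | hpos
  · refine ⟨⟨u, {v, w}⟩, mk_pair_mem_spokeSeparations.mpr (mul_neg_of_pos_of_neg hwv ?_), rfl⟩
    rwa [orient_rotate]
  · refine ⟨⟨v, {u, w}⟩, mk_pair_mem_spokeSeparations.mpr (mul_neg_of_pos_of_neg hw ?_),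
      Finset.insert_comm v u _⟩
    rwa [orient_swap_right, neg_lt_zero]

theorem IsRectDrawing.sum_choose_two_le_sum_sepCount (hf : IsRectDrawing f) (h : V) :
    ∑ v, (leftOf f h v).card.choose 2 ≤ ∑ t, sepCount f h t := by
  rw [← card_halfPlaneTriples, ← card_spokeSeparations hf.1, ← hf.image_insert_spokeSeparations]
  exact Finset.card_image_le

theorem IsRectDrawing.sum_sepCount_eq_sum_choose_two (hf : IsRectDrawing f)
    (hinj : Set.InjOn (fun x : Σ _ : V, Finset V => insert x.1 x.2) (spokeSeparations f h)) :
    ∑ t, sepCount f h t = ∑ v, (leftOf f h v).card.choose 2 := by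
  rw [← card_halfPlaneTriples, ← card_spokeSeparations hf.1, ← hf.image_insert_spokeSeparations,
    Finset.card_image_of_injOn hinj]

end Spokes

section Wheel

variable {n : ℕ} {f : Fin (n + 1) → Pt} {i j : Fin n}

theorem val_nextFin (i : Fin n) :
    (nextFin i).val = i.val + 1 ∧ i.val + 1 < n ∨ (nextFin i).val = 0 ∧ i.val + 1 = n := by
  unfold nextFin
  rcases (Nat.succ_le_of_lt i.isLt).lt_or_eq with hlt | heq
  · exact Or.inl ⟨Nat.mod_eq_of_lt hlt, hlt⟩
  · exact Or.inr ⟨by simp [← Nat.succ_eq_add_one, heq], heq⟩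

theorem nextFin_injective : Function.Injective (nextFin : Fin n → Fin n) := by
  intro i j h
  have hi := val_nextFin i
  have hj := val_nextFin j
  rw [h] at hi
  ext
  omega

theorem iff_nextFin_of_forall_iff_nextFin {P : Fin n → Prop}
    (hP : ∀ i, i ≠ j → nextFin i ≠ j → (P i ↔ P (nextFin i))) (hij : i ≠ j) :
    P i ↔ P (nextFin j) := by
  have key (d : ℕ) : ∀ i : Fin n, i ≠ j →
      (i.val = j.val + d + 1 ∨ i.val < j.val ∧ i.val + n = j.val + d + 1) →
        (P i ↔ P (nextFin j)) := by
    induction d with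
    | zero =>
      intro i _ hd
      have hj := val_nextFin j
      rw [show i = nextFin j by ext; omega]
    | succ d ih =>
      intro i hij hd
      obtain ⟨k, rfl⟩ := Finite.injective_iff_surjective.mp nextFin_injective i
      have hk := val_nextFin k
      have hkj : k ≠ j := by rintro rfl; omega
      rw [← hP k hkj hij]
      exact ih k hkj (by omega)
  rcases Nat.lt_or_gt_of_ne (Fin.val_ne_of_ne hij) with hlt | hgt
  · exact key (i.val + n - j.val - 1) i hij (by omega)
  · exact key (i.val - j.val - 1) i hij (by omega)

theorem edgeSet_wheelGraph (hn : 2 ≤ n) : (wheelGraph n).edgeSet.toFinite.toFinset =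
    (Finset.univ.image fun i : Fin n => s(0, i.succ)) ∪
      Finset.univ.image fun i : Fin n => s(i.succ, (nextFin i).succ) := by
  ext e
  simp only [Set.Finite.mem_toFinset, wheelGraph, SimpleGraph.edgeSet_fromEdgeSet, Set.mem_sdiff,
    Set.mem_union, Set.mem_ofPred_eq, Finset.mem_union, Finset.mem_image, Finset.mem_univ,
    true_and, eq_comm (a := e)]
  refine and_iff_left_of_imp ?_
  rintro (⟨i, rfl⟩ | ⟨i, rfl⟩)
  · simpa using (Fin.succ_ne_zero i).symm
  · have hi := val_nextFin i
    simp only [Sym2.mem_diagSet, Sym2.mk_isDiag_iff, Fin.ext_iff, Fin.val_succ]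
    omega

theorem drawingCrossings_wheelGraph (hn : 3 ≤ n) (f : Fin (n + 1) → Pt) :
    drawingCrossings (wheelGraph n) f =
      ∑ t, sepCount f 0 t + ∑ i : Fin n, sepCount f i.succ (nextFin i).succ := by
  unfold drawingCrossings
  rw [edgeSet_wheelGraph (by omega), Finset.sum_union, Finset.sum_image, Finset.sum_image,
    Fin.sum_univ_succ, sepCount_self, zero_add]
  · simp only [Sym2.lift_mk]
  · intro i _ j _ hij
    have hi := val_nextFin i
    have hj := val_nextFin j
    simp only [Sym2.eq_iff, Fin.ext_iff, Fin.val_succ] at hij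
    ext
    omega
  · intro i _ j _ hij
    simpa [Fin.ext_iff] using hij
  · rw [Finset.disjoint_left]
    intro e hspoke hrim
    obtain ⟨i, -, rfl⟩ := Finset.mem_image.mp hspoke
    obtain ⟨j, -, hij⟩ := Finset.mem_image.mp hrim
    simp [Fin.ext_iff] at hij

/-- The rim edges, given by their first vertex, whose end points are separated by the line through
the hub and the outer vertex `j`. -/
def rimCuts (f : Fin (n + 1) → Pt) (j : Fin n) : Finset (Fin n) :=
  {i | {0, j.succ} ∈ separatingPairs f i.succ (nextFin i).succ}

theorem mem_rimCuts :
    i ∈ rimCuts f j ↔ {0, j.succ} ∈ separatingPairs f i.succ (nextFin i).succ := by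
  simp [rimCuts]

theorem mem_rimCuts_iff_orient : i ∈ rimCuts f j ↔
    orient (f 0) (f j.succ) (f i.succ) * orient (f 0) (f j.succ) (f (nextFin i).succ) < 0 := by
  rw [mem_rimCuts, pair_mem_separatingPairs]

theorem card_image_hub_pair (s : Finset (Fin n)) :
    (s.image fun j => ({0, j.succ} : Finset (Fin (n + 1)))).card = s.card := by
  refine Finset.card_image_of_injective _ fun j k hjk => ?_
  have hj : j.succ ∈ ({0, k.succ} : Finset (Fin (n + 1))) := by
    rw [← show ({0, j.succ} : Finset (Fin (n + 1))) = {0, k.succ} from hjk]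
    simp
  simpa using hj

theorem sum_card_rimCuts (f : Fin (n + 1) → Pt) :
    ∑ j, (rimCuts f j).card = ∑ i, (Finset.univ.filter fun j => i ∈ rimCuts f j).card := by
  simpa [Finset.bipartiteAbove, Finset.bipartiteBelow] using
    Finset.sum_card_bipartiteAbove_eq_sum_card_bipartiteBelow (s := Finset.univ)
      (t := Finset.univ) fun j i => i ∈ rimCuts f j

theorem sum_card_rimCuts_le_sum_sepCount (hf : Function.Injective f) :
    ∑ j, (rimCuts f j).card ≤ ∑ i : Fin n, sepCount f i.succ (nextFin i).succ := by
  rw [sum_card_rimCuts]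
  refine Finset.sum_le_sum fun i _ => ?_
  rw [sepCount_eq_card_separatingPairs hf, ← card_image_hub_pair]
  refine Finset.card_le_card (Finset.image_subset_iff.mpr fun j hj => ?_)
  exact mem_rimCuts.mp ((Finset.mem_filter_univ j).mp hj)

theorem sum_sepCount_le_sum_card_rimCuts (hf : Function.Injective f)
    (hrim : ∀ i u v : Fin n,
      {u.succ, v.succ} ∉ separatingPairs f i.succ (nextFin i).succ) :
    ∑ i : Fin n, sepCount f i.succ (nextFin i).succ ≤ ∑ j, (rimCuts f j).card := by
  rw [sum_card_rimCuts]
  refine Finset.sum_le_sum fun i _ => ?_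
  rw [sepCount_eq_card_separatingPairs hf, ← card_image_hub_pair]
  refine Finset.card_le_card fun e he => ?_
  have mem_image {j : Fin n} (hj : {0, j.succ} ∈ separatingPairs f i.succ (nextFin i).succ) :
      {0, j.succ} ∈ (Finset.univ.filter fun j => i ∈ rimCuts f j).image
        fun j => ({0, j.succ} : Finset _) :=
    Finset.mem_image_of_mem _ ((Finset.mem_filter_univ j).mpr (mem_rimCuts.mpr hj))
  obtain ⟨a, b, rfl, hab⟩ := exists_pair_of_mem_separatingPairs he
  cases a using Fin.cases with
  | zero =>
    cases b using Fin.cases with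
    | zero => exact absurd (pair_mem_separatingPairs.mp hab) (by simp)
    | succ v => exact mem_image hab
  | succ u =>
    cases b using Fin.cases with
    | zero =>
      rw [Finset.pair_comm] at hab ⊢
      exact mem_image hab
    | succ v => exact absurd hab (hrim i u v)

theorem IsRectDrawing.rimCuts_nonempty (hf : IsRectDrawing f)
    (hzero : (leftOf f 0 j.succ).card ≠ 0) (hlast : (leftOf f 0 j.succ).card ≠ n - 1) :
    (rimCuts f j).Nonempty := by
  by_contra hempty
  rw [Finset.not_nonempty_iff_eq_empty] at hempty
  have orient_ne {i : Fin n} (hij : i ≠ j) : orient (f 0) (f j.succ) (f i.succ) ≠ 0 :=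
    hf.orient_ne_zero (Fin.succ_ne_zero j).symm (Fin.succ_ne_zero i).symm
      ((Fin.succ_injective n).ne hij.symm)
  have same_side (i : Fin n) (hij : i ≠ j) : i.succ ∈ leftOf f 0 j.succ ↔
      (nextFin j).succ ∈ leftOf f 0 j.succ := by
    -- Two consecutive outer vertices other than `j` are never on different sides.
    refine iff_nextFin_of_forall_iff_nextFin (P := fun i => i.succ ∈ leftOf f 0 j.succ)
      (fun i hij hij' => ?_) hij
    have hcut : i ∉ rimCuts f j := by simp [hempty]
    rw [mem_rimCuts_iff_orient, not_lt] at hcut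
    have hpos := hcut.lt_of_ne' (mul_ne_zero (orient_ne hij) (orient_ne hij'))
    simp only [mem_leftOf]
    exact pos_iff_pos_of_mul_pos hpos
  by_cases hnext : (nextFin j).succ ∈ leftOf f 0 j.succ
  · have hright : (Finset.univ.filter fun w => j.succ ∈ leftOf f 0 w) = ∅ := by
      refine Finset.filter_eq_empty_iff.mpr fun w _ hw => ?_
      obtain ⟨i, rfl⟩ := Fin.exists_succ_eq.mpr (hub_ne_of_mem_leftOf hw).1.symm
      have hij : i ≠ j := fun hij => ne_of_mem_leftOf hw (congrArg Fin.succ hij)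
      exact notMem_leftOf_symm hw ((same_side i hij).mpr hnext)
    have hcard := hf.card_leftOf_add_card (Fin.succ_ne_zero j).symm
    rw [hright, Finset.card_empty, Fintype.card_fin] at hcard
    omega
  · refine hzero (Finset.card_eq_zero.mpr (Finset.eq_empty_of_forall_notMem fun w hw => ?_))
    obtain ⟨i, rfl⟩ := Fin.exists_succ_eq.mpr (hub_ne_of_mem_leftOf hw).2.symm
    have hij : i ≠ j := fun hij => (ne_of_mem_leftOf hw).symm (congrArg Fin.succ hij)
    exact hnext ((same_side i hij).mp hw)

theorem IsRectDrawing.sum_card_leftOf_succ (hf : IsRectDrawing f) :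
    ∑ i : Fin n, (leftOf f 0 i.succ).card = n.choose 2 := by
  simpa [Fin.sum_univ_succ, leftOf_self] using hf.sum_card_leftOf 0

end Wheel

section ChooseTwo

variable {c o : ℕ}

theorem two_mul_choose_two (m : ℕ) : 2 * (m.choose 2 : ℤ) = m * (m - 1) := by
  have hm := Nat.cast_choose_two ℚ m
  rw [← Int.cast_inj (α := ℚ)]
  push_cast
  linarith

-- The chord of `o ↦ o.choose 2` over `[c, c + 1]` is `o ↦ c * o - (c + 1).choose 2`.
theorem two_mul_choose_two_add_sub_mul (c o : ℕ) :
    2 * (o.choose 2 + (c + 1).choose 2 - c * o : ℤ) = (o - c) * (o - (c + 1)) := by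
  have ho := two_mul_choose_two o
  have hc := two_mul_choose_two (c + 1)
  push_cast at hc
  linear_combination ho + hc

theorem choose_two_add_eq_mul_iff :
    o.choose 2 + (c + 1).choose 2 = c * o ↔ o = c ∨ o = c + 1 := by
  have h := two_mul_choose_two_add_sub_mul c o
  zify
  rw [← sub_eq_zero (b := (c * o : ℤ)), ← mul_eq_zero_iff_left two_ne_zero, h, mul_eq_zero,
    sub_eq_zero, sub_eq_zero]

theorem mul_le_choose_two_add (c o : ℕ) : c * o ≤ o.choose 2 + (c + 1).choose 2 := by
  have h := two_mul_choose_two_add_sub_mul c o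
  have hnonneg : (0 : ℤ) ≤ (o - c) * (o - (c + 1)) := by
    rcases le_or_gt o c with hle | hlt
    · exact mul_nonneg_of_nonpos_of_nonpos (by omega) (by omega)
    · exact mul_nonneg (by omega) (by omega)
  zify
  linarith

theorem mul_choose_two_add_eq_div_two_add (c d : ℕ) :
    c * (c + d + 2).choose 2 + (c + d + 2) =
      (c + d + 2) * (c * d + 2) / 2 + (c + d + 2) * (c + 1).choose 2 := by
  have hn := two_mul_choose_two (c + d + 2)
  have hc := two_mul_choose_two (c + 1)
  have key : 2 * (c * (c + d + 2).choose 2 + (c + d + 2)) =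
      (c + d + 2) * (c * d + 2) + 2 * ((c + d + 2) * (c + 1).choose 2) := by
    zify
    push_cast at hn hc
    linear_combination c * hn - (c + d + 2) * hc
  omega

end ChooseTwo

section LowerBound

variable {n c : ℕ}

theorem IsRectDrawing.mul_lt_choose_two_add_card_rimCuts {f : Fin (n + 1) → Pt}
    (hf : IsRectDrawing f) (hc : 0 < c) (hcn : c + 2 < n) (j : Fin n) :
    c * (leftOf f 0 j.succ).card <
      (leftOf f 0 j.succ).card.choose 2 + (c + 1).choose 2 + (rimCuts f j).card := by
  have hle := mul_le_choose_two_add c (leftOf f 0 j.succ).card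
  by_cases hflat : (leftOf f 0 j.succ).card = c ∨ (leftOf f 0 j.succ).card = c + 1
  · have hcut := (hf.rimCuts_nonempty (j := j) (by omega) (by omega)).card_pos
    omega
  · rw [← choose_two_add_eq_mul_iff] at hflat
    omega

theorem IsRectDrawing.le_drawingCrossings_wheelGraph {f : Fin (n + 1) → Pt}
    (hf : IsRectDrawing f) (hc : 0 < c) (hcn : c + 2 < n) :
    c * n.choose 2 + n ≤ drawingCrossings (wheelGraph n) f + n * (c + 1).choose 2 := by
  have hspokes := hf.sum_choose_two_le_sum_sepCount 0
  rw [Fin.sum_univ_succ, leftOf_self, Finset.card_empty, Nat.choose_zero_succ, zero_add] at hspokes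
  have hrim := sum_card_rimCuts_le_sum_sepCount hf.1
  have hvertices := Finset.sum_le_sum fun j (_ : j ∈ Finset.univ) =>
    Nat.succ_le_of_lt (hf.mul_lt_choose_two_add_card_rimCuts hc hcn j)
  simp only [Nat.succ_eq_add_one, Finset.sum_add_distrib, ← Finset.mul_sum, Finset.sum_const,
    Finset.card_univ, Fintype.card_fin, smul_eq_mul, mul_one, hf.sum_card_leftOf_succ] at hvertices
  rw [drawingCrossings_wheelGraph (by omega)]
  omega

end LowerBound

section OddGon

variable {n : ℕ} {i j l : Fin n}

/-- The point of the unit circle with argument `θ`. -/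
def circlePoint (θ : ℝ) : Pt :=
  (Real.cos θ, Real.sin θ)

theorem orient_zero_circlePoint (α β : ℝ) :
    orient (0, 0) (circlePoint α) (circlePoint β) = Real.sin (β - α) := by
  simp only [orient, circlePoint, Real.sin_sub]
  ring

theorem orient_circlePoint (α β γ : ℝ) :
    orient (circlePoint α) (circlePoint β) (circlePoint γ) =
      4 * Real.sin ((β - α) / 2) * Real.sin ((γ - β) / 2) * Real.sin ((γ - α) / 2) := by
  have key (x y : ℝ) : Real.sin (2 * x) + Real.sin (2 * y) - Real.sin (2 * x + 2 * y) =
      4 * Real.sin x * Real.sin y * Real.sin (x + y) := by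
    rw [Real.sin_add, Real.sin_add, Real.cos_two_mul', Real.cos_two_mul', Real.sin_two_mul,
      Real.sin_two_mul]
    linear_combination (-2 * Real.sin y * Real.cos y) * Real.sin_sq_add_cos_sq x +
      (-2 * Real.sin x * Real.cos x) * Real.sin_sq_add_cos_sq y
  calc orient (circlePoint α) (circlePoint β) (circlePoint γ)
      = Real.sin (β - α) + Real.sin (γ - β) - Real.sin (γ - α) := by
        simp only [orient, circlePoint, Real.sin_sub]
        ring
    _ = _ := by
        convert key ((β - α) / 2) ((γ - β) / 2) using 3 <;> ring_nf

theorem sin_pi_mul_div_pos {x N : ℝ} (hx : 0 < x) (hxN : x < N) :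
    0 < Real.sin (Real.pi * x / N) := by
  have hN := hx.trans hxN
  refine Real.sin_pos_of_pos_of_lt_pi (by positivity) ?_
  rw [div_lt_iff₀ hN]
  exact mul_lt_mul_of_pos_left hxN Real.pi_pos

/-- The drawing that places the hub at the center of a regular `(2 * (n / 2) + 1)`-gon and the outer
vertices, in cyclic order, at the first `n` of its vertices: all of them when `n` is odd, and all
but one when `n` is even. -/
def oddGonDrawing (n : ℕ) : Fin (n + 1) → Pt :=
  Fin.cons (0, 0) fun i => circlePoint (2 * Real.pi * i.val / (2 * (n / 2 : ℕ) + 1))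

/-- Among the vertices of the regular `(2 * (n / 2) + 1)`-gon, `j` is one of the `n / 2` vertices
that follow `i` in the cyclic order. -/
def IsAhead (i j : Fin n) : Prop :=
  i < j ∧ j.val ≤ i.val + n / 2 ∨ j.val + n / 2 < i.val

namespace oddGonDrawing

theorem isAhead_or_isAhead (hij : i ≠ j) : IsAhead i j ∨ IsAhead j i := by
  unfold IsAhead
  omega

theorem orient_hub_pos (hij : IsAhead i j) :
    0 < orient (oddGonDrawing n 0) (oddGonDrawing n i.succ) (oddGonDrawing n j.succ) := by
  simp only [oddGonDrawing, Fin.cons_zero, Fin.cons_succ, orient_zero_circlePoint]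
  rcases hij with ⟨hlt, hle⟩ | hlt
  · have hlt : (i.val : ℝ) < j.val := by exact_mod_cast hlt
    have hle : (j.val : ℝ) ≤ i.val + (n / 2 : ℕ) := by exact_mod_cast hle
    convert sin_pi_mul_div_pos (x := 2 * (j.val - i.val)) (N := 2 * (n / 2 : ℕ) + 1)
      (by linarith) (by linarith) using 2
    ring
  · have hlt : (j.val : ℝ) + (n / 2 : ℕ) + 1 ≤ i.val := by exact_mod_cast hlt
    have hi : (i.val : ℝ) + 1 ≤ n := by exact_mod_cast i.isLt
    have hn : (n : ℝ) ≤ 2 * (n / 2 : ℕ) + 1 := by norm_cast; omega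
    rw [← Real.sin_add_two_pi]
    convert sin_pi_mul_div_pos (x := 2 * (j.val - i.val + (2 * (n / 2 : ℕ) + 1)))
      (N := 2 * (n / 2 : ℕ) + 1) (by linarith) (by linarith) using 2
    field_simp

theorem orient_hub_pos_iff :
    0 < orient (oddGonDrawing n 0) (oddGonDrawing n i.succ) (oddGonDrawing n j.succ) ↔
      IsAhead i j := by
  refine ⟨fun h => ?_, orient_hub_pos⟩
  have hij : i ≠ j := by rintro rfl; simp at h
  refine (isAhead_or_isAhead hij).resolve_right fun hji => ?_
  rw [orient_swap_right] at h
  linarith [orient_hub_pos hji]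

theorem orient_hub_neg_iff :
    orient (oddGonDrawing n 0) (oddGonDrawing n i.succ) (oddGonDrawing n j.succ) < 0 ↔
      IsAhead j i := by
  rw [orient_swap_right, neg_lt_zero, orient_hub_pos_iff]

theorem orient_rim_pos_of_lt (hij : i < j) (hjl : j < l) :
    0 < orient (oddGonDrawing n i.succ) (oddGonDrawing n j.succ) (oddGonDrawing n l.succ) := by
  have sin_pos {a b : Fin n} (hab : a < b) :
      0 < Real.sin ((2 * Real.pi * b.val / (2 * (n / 2 : ℕ) + 1) -
        2 * Real.pi * a.val / (2 * (n / 2 : ℕ) + 1)) / 2) := by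
    have hlt : (a.val : ℝ) < b.val := by exact_mod_cast hab
    have hlast : (b.val : ℝ) < a.val + (2 * (n / 2 : ℕ) + 1) := by norm_cast; omega
    convert sin_pi_mul_div_pos (x := b.val - a.val) (N := 2 * (n / 2 : ℕ) + 1)
      (by linarith) (by linarith) using 2
    ring
  simp only [oddGonDrawing, Fin.cons_succ, orient_circlePoint]
  have h₁ := sin_pos hij
  have h₂ := sin_pos hjl
  have h₃ := sin_pos (hij.trans hjl)
  positivity

theorem orient_rim_pos_of_sbtw (h : sbtw i j l) :
    0 < orient (oddGonDrawing n i.succ) (oddGonDrawing n j.succ) (oddGonDrawing n l.succ) := by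
  rcases Fin.sbtw_iff.mp h with ⟨hij, hjl⟩ | ⟨hjl, hli⟩ | ⟨hli, hij⟩
  · exact orient_rim_pos_of_lt hij hjl
  · rw [← orient_rotate]; exact orient_rim_pos_of_lt hjl hli
  · rw [orient_rotate (oddGonDrawing n l.succ)]; exact orient_rim_pos_of_lt hli hij

theorem orient_rim_pos_iff :
    0 < orient (oddGonDrawing n i.succ) (oddGonDrawing n j.succ) (oddGonDrawing n l.succ) ↔
      sbtw i j l := by
  refine ⟨fun h => ?_, orient_rim_pos_of_sbtw⟩
  have hij : i ≠ j := by rintro rfl; simp at h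
  have hil : i ≠ l := by rintro rfl; simp at h
  have hjl : j ≠ l := by rintro rfl; simp at h
  by_contra hijl
  have hilj : sbtw i l j := by rw [Fin.sbtw_iff] at hijl ⊢; omega
  rw [orient_swap_right] at h
  linarith [orient_rim_pos_of_sbtw hilj]

theorem orient_rim_neg_iff :
    orient (oddGonDrawing n i.succ) (oddGonDrawing n j.succ) (oddGonDrawing n l.succ) < 0 ↔
      sbtw i l j := by
  rw [orient_swap_right, neg_lt_zero, orient_rim_pos_iff]

theorem isRectDrawing (hn : 2 ≤ n) : IsRectDrawing (oddGonDrawing n) := by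
  refine isRectDrawing_of_orient_ne_zero_of_lt (by rw [Fintype.card_fin]; omega) ?_
  intro a b c hab hbc
  obtain ⟨j, rfl⟩ := Fin.exists_succ_eq.mpr (Fin.ne_zero_of_lt hab)
  obtain ⟨l, rfl⟩ := Fin.exists_succ_eq.mpr (Fin.ne_zero_of_lt hbc)
  cases a using Fin.cases with
  | zero =>
    rw [← lt_or_lt_iff_ne, orient_hub_neg_iff, orient_hub_pos_iff]
    exact (isAhead_or_isAhead (Fin.succ_lt_succ_iff.mp hbc).ne).symm
  | succ i =>
    exact (orient_rim_pos_of_lt (Fin.succ_lt_succ_iff.mp hab) (Fin.succ_lt_succ_iff.mp hbc)).ne'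

theorem exists_isAhead_of_mem_spokeSeparations {x : Σ _ : Fin (n + 1), Finset (Fin (n + 1))}
    (hx : x ∈ spokeSeparations (oddGonDrawing n) 0) :
    ∃ u t v : Fin n, x = ⟨t.succ, {u.succ, v.succ}⟩ ∧ IsAhead u t ∧ IsAhead t v ∧ IsAhead u v := by
  obtain ⟨t, a, b, rfl, hab, ht⟩ := exists_of_mem_spokeSeparations hx
  obtain ⟨u, rfl⟩ := Fin.exists_succ_eq.mpr (hub_ne_of_mem_leftOf hab).1.symm
  obtain ⟨v, rfl⟩ := Fin.exists_succ_eq.mpr (hub_ne_of_mem_leftOf hab).2.symm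
  rw [mem_leftOf] at hab
  cases t using Fin.cases with
  | zero => rw [orient_rotate] at ht; linarith
  | succ t =>
    rw [orient_hub_pos_iff] at hab
    rw [orient_rim_neg_iff, Fin.sbtw_iff] at ht
    refine ⟨u, t, v, rfl, ?_, ?_, hab⟩ <;> unfold IsAhead at * <;> omega

theorem injOn_insert_spokeSeparations (n : ℕ) :
    Set.InjOn (fun x : Σ _ : Fin (n + 1), Finset (Fin (n + 1)) => insert x.1 x.2)
      (spokeSeparations (oddGonDrawing n) 0) := by
  intro x hx y hy hxy
  obtain ⟨u, t, v, rfl, hut, htv, huv⟩ := exists_isAhead_of_mem_spokeSeparations hx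
  obtain ⟨u', t', v', rfl, hut', htv', huv'⟩ := exists_isAhead_of_mem_spokeSeparations hy
  have mem {w : Fin n} : w = t ∨ w = u ∨ w = v ↔ w = t' ∨ w = u' ∨ w = v' := by
    simpa using Finset.ext_iff.mp hxy w.succ
  dsimp only at hxy
  -- `t` is the middle one of the three vertices `u`, `t`, `v` in the order given by `IsAhead`.
  have htt' : t = t' := by
    have ht' := mem.mpr (Or.inl rfl)
    have hu' := mem.mpr (Or.inr (Or.inl rfl))
    have hv' := mem.mpr (Or.inr (Or.inr rfl))
    unfold IsAhead at *
    omega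
  have notMem {u t v : Fin n} (hut : IsAhead u t) (htv : IsAhead t v) :
      t.succ ∉ ({u.succ, v.succ} : Finset (Fin (n + 1))) := by
    simp only [Finset.mem_insert, Finset.mem_singleton, Fin.succ_inj]
    unfold IsAhead at *
    omega
  subst htt'
  rw [← Finset.erase_insert (notMem hut htv), hxy, Finset.erase_insert (notMem hut' htv')]

theorem card_leftOf (i : Fin n) :
    (leftOf (oddGonDrawing n) 0 i.succ).card = (n - 1) / 2 ∨
      (leftOf (oddGonDrawing n) 0 i.succ).card = (n - 1) / 2 + 1 := by
  have hval : (leftOf (oddGonDrawing n) 0 i.succ).map Fin.valEmbedding =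
      Finset.Ioc (i.val + 1) (min (i.val + n / 2 + 1) n) ∪ Finset.Ioc 0 (i.val - n / 2) := by
    ext m
    simp only [Finset.mem_map, Fin.valEmbedding_apply, Finset.mem_union, Finset.mem_Ioc, le_min_iff]
    constructor
    · rintro ⟨w, hw, rfl⟩
      obtain ⟨j, rfl⟩ := Fin.exists_succ_eq.mpr (hub_ne_of_mem_leftOf hw).2.symm
      rw [mem_leftOf, orient_hub_pos_iff, IsAhead] at hw
      rw [Fin.val_succ]
      omega
    · intro hm
      refine ⟨Fin.succ ⟨m - 1, by omega⟩, ?_, Nat.sub_add_cancel (by omega)⟩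
      rw [mem_leftOf, orient_hub_pos_iff, IsAhead, Fin.lt_def]
      dsimp only
      omega
  rw [← Finset.card_map, hval, Finset.card_union_of_disjoint, Nat.card_Ioc, Nat.card_Ioc]
  · omega
  · rw [Finset.disjoint_left]
    simp only [Finset.mem_Ioc]
    omega

theorem card_rimCuts_le_one (j : Fin n) : (rimCuts (oddGonDrawing n) j).card ≤ 1 := by
  rw [Finset.card_le_one]
  intro a ha b hb
  rw [mem_rimCuts_iff_orient, mul_neg_iff, orient_hub_pos_iff, orient_hub_neg_iff,
    orient_hub_pos_iff, orient_hub_neg_iff] at ha hb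
  have hnext := val_nextFin a
  have hnext' := val_nextFin b
  unfold IsAhead at ha hb
  ext
  omega

theorem rim_pair_notMem_separatingPairs (i u v : Fin n) :
    {u.succ, v.succ} ∉ separatingPairs (oddGonDrawing n) i.succ (nextFin i).succ := by
  rw [pair_mem_separatingPairs, mul_neg_iff, orient_rim_pos_iff, orient_rim_neg_iff,
    orient_rim_pos_iff, orient_rim_neg_iff]
  simp only [Fin.sbtw_iff]
  have hi := val_nextFin i
  omega

theorem drawingCrossings_le (hn : 3 ≤ n) :
    drawingCrossings (wheelGraph n) (oddGonDrawing n) + n * ((n - 1) / 2 + 1).choose 2 ≤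
      (n - 1) / 2 * n.choose 2 + n := by
  have hf : IsRectDrawing (oddGonDrawing n) := isRectDrawing (by omega)
  have hspokes := hf.sum_sepCount_eq_sum_choose_two (injOn_insert_spokeSeparations n)
  have hrim := (sum_sepCount_le_sum_card_rimCuts hf.1 rim_pair_notMem_separatingPairs).trans
    (Finset.sum_le_card_nsmul _ _ 1 fun j _ => card_rimCuts_le_one j)
  have hvertices := Finset.sum_congr rfl fun i (_ : i ∈ Finset.univ) =>
    choose_two_add_eq_mul_iff.mpr (card_leftOf (n := n) i)
  rw [Finset.sum_add_distrib, ← Finset.mul_sum, hf.sum_card_leftOf_succ, Finset.sum_const,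
    Finset.card_univ, Fintype.card_fin, smul_eq_mul] at hvertices
  rw [Finset.card_univ, Fintype.card_fin, smul_eq_mul, mul_one] at hrim
  rw [drawingCrossings_wheelGraph hn, hspokes, Fin.sum_univ_succ, leftOf_self, Finset.card_empty,
    Nat.choose_zero_succ, zero_add]
  omega

end oddGonDrawing

end OddGon

theorem mul_div_two_eq_mul_div_eight_of_even {n : ℕ} (hn : 4 ≤ n) (heven : Even n) :
    n * ((n - 1) / 2 * ((n - 2) / 2) + 2) / 2 = n * (n ^ 2 - 4 * n + 12) / 8 := by
  obtain ⟨k, rfl⟩ : ∃ k, n = 2 * (k + 1) := by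
    obtain ⟨m, rfl⟩ := heven
    exact ⟨m - 1, by omega⟩
  have hsq : (2 * (k + 1)) ^ 2 - 4 * (2 * (k + 1)) + 12 = 4 * (k * k + 2) := by
    have hle : 4 * (2 * (k + 1)) ≤ (2 * (k + 1)) ^ 2 := by nlinarith
    zify [hle]
    ring
  rw [hsq, show (2 * (k + 1) - 1) / 2 = k by omega, show (2 * (k + 1) - 2) / 2 = k by omega,
    show 2 * (k + 1) * (4 * (k * k + 2)) = 4 * (2 * (k + 1) * (k * k + 2)) by ring]
  omega

/-- For odd `n` the value is `n(n² - 4n + 11)/8`. -/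
theorem stmt_8_general (n : ℕ) (hn : 4 ≤ n) :
    OCN (wheelGraph n) = n * ((n - 1) / 2 * ((n - 2) / 2) + 2) / 2 := by
  have hvalue := mul_choose_two_add_eq_div_two_add ((n - 1) / 2) ((n - 2) / 2)
  rw [show (n - 1) / 2 + (n - 2) / 2 + 2 = n by omega] at hvalue
  have hle := oddGonDrawing.drawingCrossings_le (n := n) (by omega)
  have hmem : drawingCrossings (wheelGraph n) (oddGonDrawing n) ∈
      {k | ∃ f, IsRectDrawing f ∧ drawingCrossings (wheelGraph n) f = k} :=
    ⟨_, oddGonDrawing.isRectDrawing (by omega), rfl⟩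
  refine le_antisymm ((Nat.sInf_le hmem).trans (by omega)) ?_
  obtain ⟨f, hf, hOCN⟩ := Nat.sInf_mem ⟨_, hmem⟩
  have hge := hf.le_drawingCrossings_wheelGraph (c := (n - 1) / 2) (by omega) (by omega)
  rw [OCN, ← hOCN]
  omega

end

/-- For even n ≥ 6, `OCN(W_{n,1}) = n(n² - 4n + 12)/8`. -/
theorem stmt_8 (n : ℕ) (hn : 6 ≤ n) (heven : Even n) :
    OCN (wheelGraph n) = n * (n ^ 2 - 4 * n + 12) / 8 := by
  rw [stmt_8_general n (by omega), mul_div_two_eq_mul_div_eight_of_even (by omega) heven]
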